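/- For j ≥ 2, the expectation E_{a,b}[ (a-1)(b-1)²(a - 1/2)(a+b-1)^{j-1}/(a+b-2)³ ] over a, b independent uniform on (0,1) is negative when j is odd, and the sequence of these expectations over even j is decreasing in j. -/

import Mathlib

/-- `E j = E_{a,b}[ (a-1)(b-1)²(a-1/2)(a+b-1)^{j-1}/(a+b-2)³ ]` for `a, b` i.i.d.
uniform on `(0,1)`, written as a double integral over the unit square. -/
noncomputable def dirExp (j : ℕ) : ℝ :=
  ∫ b in (0:ℝ)..1, ∫ a in (0:ℝ)..1,
    (a - 1) * (b - 1) ^ 2 * (a - 1/2) * (a + b - 1) ^ (j - 1) / (a + b - 2) ^ 3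

/-!
With `x = 1 - a`, `y = 1 - b` and `σ = x + y`, integrating out `y` at fixed `σ` turns the
expectation into a moment `∫ w σ * (1 - σ) ^ (j - 1)` over `[0, 2]` of an explicit density `w`.
Folding at `σ = 1 ∓ t` leaves moments `∫ t ^ (j - 1) * (w (1 - t) ± w (1 + t))` over `[0, 1]`.
For even `j` the sign is `-` and the folded density is positive, so its moments decrease strictly.
For odd `j` the folded density is `(1 - t) * q t / (60 * (1 + t) ^ 3)` where the cubic `q` changes
sign once, from `+` to `-`. Since `t ^ n / (1 + t) ^ 4` is increasing on `[0, 1]` for `n ≥ 2`, the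
sign of the moment is controlled by the single number `∫ (1 + t) * (1 - t) * q t = -11 / 60`.
-/

open MeasureTheory Set Function

section Shear

variable {E : Type*} [NormedAddCommGroup E] [NormedSpace ℝ E]

section AddGroup

variable {G : Type*} [AddGroup G] [MeasurableSpace G] [MeasurableAdd₂ G] [MeasurableNeg G]
  {μ ν : Measure G} [SFinite μ] [SFinite ν] [μ.IsAddRightInvariant]

theorem integral_integral_eq_integral_integral_sub {f : G × G → E}
    (hf : Integrable f (μ.prod ν)) :
    ∫ y, ∫ x, f (x, y) ∂μ ∂ν = ∫ s, ∫ y, f (s - y, y) ∂ν ∂μ := by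
  have hf_shear : Integrable (fun p : G × G => f (p.1 - p.2, p.2)) (μ.prod ν) :=
    (measurePreserving_sub_prod μ ν).integrable_comp_of_integrable hf
  calc ∫ y, ∫ x, f (x, y) ∂μ ∂ν
      = ∫ y, ∫ s, f (s - y, y) ∂μ ∂ν :=
        integral_congr_ae (.of_forall fun y =>
          (integral_sub_right_eq_self (fun x => f (x, y)) y).symm)
    _ = ∫ s, ∫ y, f (s - y, y) ∂ν ∂μ := integral_integral_swap hf_shear.swap

theorem setIntegral_setIntegral_eq_integral_setIntegral_sub {f : G → G → E} {A B : Set G}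
    (hA : MeasurableSet A) (hB : MeasurableSet B)
    (hf : IntegrableOn (uncurry f) (A ×ˢ B) (μ.prod ν)) :
    ∫ y in B, ∫ x in A, f x y ∂μ ∂ν =
      ∫ s, ∫ y in B ∩ (fun y => s - y) ⁻¹' A, f (s - y) y ∂ν ∂μ := by
  have hsub (s : G) : MeasurableSet ((fun y => s - y) ⁻¹' A) := measurable_const_sub s hA
  have key := integral_integral_eq_integral_integral_sub
    ((integrable_indicator_iff (hA.prod hB)).2 hf)
  simp only [← integral_indicator, hA, hB, hsub, MeasurableSet.inter]
  convert key using 4 with y s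
  · by_cases hy : y ∈ B
    · simp only [indicator_of_mem hy]
      congr with x
      by_cases hx : x ∈ A <;> simp [hx, hy]
    · simp [hy]
  · ext y
    by_cases hx : s - y ∈ A <;> by_cases hy : y ∈ B <;> simp [hx, hy]

end AddGroup

theorem max_sub_le_min_sub_iff {a₁ a₂ b₁ b₂ s : ℝ} (ha : a₁ ≤ a₂) (hb : b₁ ≤ b₂) :
    max b₁ (s - a₂) ≤ min b₂ (s - a₁) ↔ s ∈ Icc (a₁ + b₁) (a₂ + b₂) := by
  rw [max_le_iff, le_min_iff, le_min_iff, mem_Icc]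
  grind

theorem intervalIntegral_intervalIntegral_eq_sub {f : ℝ → ℝ → E} {a₁ a₂ b₁ b₂ : ℝ}
    (ha : a₁ ≤ a₂) (hb : b₁ ≤ b₂) (hf : IntegrableOn (uncurry f) (Icc a₁ a₂ ×ˢ Icc b₁ b₂)) :
    ∫ y in b₁..b₂, ∫ x in a₁..a₂, f x y =
      ∫ s in (a₁ + b₁)..(a₂ + b₂), ∫ y in (max b₁ (s - a₂))..(min b₂ (s - a₁)), f (s - y) y := by
  have hslice (s : ℝ) : Icc b₁ b₂ ∩ (fun y => s - y) ⁻¹' Icc a₁ a₂ =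
      Icc (max b₁ (s - a₂)) (min b₂ (s - a₁)) := by
    rw [preimage_const_sub_Icc, Icc_inter_Icc]
  have hsum : a₁ + b₁ ≤ a₂ + b₂ := add_le_add ha hb
  calc ∫ y in b₁..b₂, ∫ x in a₁..a₂, f x y
      = ∫ y in Icc b₁ b₂, ∫ x in Icc a₁ a₂, f x y := by
        simp only [intervalIntegral.integral_of_le, ha, hb, integral_Icc_eq_integral_Ioc]
    _ = ∫ s, ∫ y in Icc (max b₁ (s - a₂)) (min b₂ (s - a₁)), f (s - y) y := by
        rw [setIntegral_setIntegral_eq_integral_setIntegral_sub measurableSet_Icc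
          measurableSet_Icc hf]
        simp only [hslice]
    _ = ∫ s in Icc (a₁ + b₁) (a₂ + b₂),
          ∫ y in Icc (max b₁ (s - a₂)) (min b₂ (s - a₁)), f (s - y) y :=
        (setIntegral_eq_integral_of_forall_compl_eq_zero fun s hs => by
          rw [Icc_eq_empty (mt (max_sub_le_min_sub_iff ha hb).1 hs), setIntegral_empty]).symm
    _ = ∫ s in Icc (a₁ + b₁) (a₂ + b₂),
          ∫ y in (max b₁ (s - a₂))..(min b₂ (s - a₁)), f (s - y) y :=
        setIntegral_congr_fun measurableSet_Icc fun s hs => by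
          simp only [intervalIntegral.integral_of_le ((max_sub_le_min_sub_iff ha hb).2 hs),
            integral_Icc_eq_integral_Ioc]
    _ = _ := by rw [intervalIntegral.integral_of_le hsum, integral_Icc_eq_integral_Ioc]

theorem intervalIntegral_symm_eq_integral_sub_add_add {f : ℝ → E} {c r : ℝ}
    (hleft : IntervalIntegrable f volume (c - r) c)
    (hright : IntervalIntegrable f volume c (c + r)) :
    ∫ s in (c - r)..(c + r), f s = ∫ t in 0..r, (f (c - t) + f (c + t)) := by
  have hsub : IntervalIntegrable (fun t => f (c - t)) volume 0 r := by
    simpa using (hleft.comp_sub_left c).symm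
  have hadd : IntervalIntegrable (fun t => f (c + t)) volume 0 r := by
    simpa using hright.comp_add_left c
  rw [intervalIntegral.integral_add hsub hadd, intervalIntegral.integral_comp_sub_left f,
    intervalIntegral.integral_comp_add_left f, sub_zero, add_zero,
    intervalIntegral.integral_add_adjacent_intervals hleft hright]

end Shear

section Moments

theorem intervalIntegrable_mul_of_monotoneOn {φ g : ℝ → ℝ} {a b : ℝ} (hab : a ≤ b)
    (hφ : MonotoneOn φ (Icc a b)) (hg : IntervalIntegrable g volume a b) :
    IntervalIntegrable (fun t => φ t * g t) volume a b := by
  have hφ_int := (uIcc_of_le hab ▸ hφ : MonotoneOn φ (uIcc a b)).intervalIntegrable (μ := volume)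
  rw [intervalIntegrable_iff_integrableOn_Icc_of_le hab] at hg hφ_int ⊢
  refine hg.bdd_mul (c := max |φ a| |φ b|) hφ_int.aestronglyMeasurable ?_
  filter_upwards [ae_restrict_mem measurableSet_Icc] with t ht
  exact abs_le_max_abs_abs (hφ (left_mem_Icc.2 hab) ht ht.1) (hφ ht (right_mem_Icc.2 hab) ht.2)

theorem integral_mul_le_of_single_crossing {φ g : ℝ → ℝ} {a b c : ℝ} (hab : a ≤ b)
    (hφ : MonotoneOn φ (Icc a b)) (hg : IntervalIntegrable g volume a b) (hc : c ∈ Icc a b)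
    (hcross : ∀ t ∈ Icc a b, 0 ≤ (c - t) * g t) :
    ∫ t in a..b, φ t * g t ≤ φ c * ∫ t in a..b, g t := by
  rw [← intervalIntegral.integral_const_mul]
  refine intervalIntegral.integral_mono_on hab (intervalIntegrable_mul_of_monotoneOn hab hφ hg)
    (hg.const_mul _) fun t ht => ?_
  have hsign := hcross t ht
  rcases lt_trichotomy t c with htc | rfl | hct
  · have hgt : 0 ≤ g t := nonneg_of_mul_nonneg_right hsign (sub_pos.2 htc)
    exact mul_le_mul_of_nonneg_right (hφ ht hc htc.le) hgt
  · rfl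
  · have hgt : g t ≤ 0 := nonpos_of_mul_nonneg_right hsign (sub_neg.2 hct)
    exact mul_le_mul_of_nonpos_right (hφ hc ht hct.le) hgt

theorem strictAnti_integral_pow_mul {w : ℝ → ℝ} (hw : IntervalIntegrable w volume 0 1)
    (hpos : ∀ t ∈ Ioo (0 : ℝ) 1, 0 < w t) :
    StrictAnti fun n : ℕ => ∫ t in (0 : ℝ)..1, t ^ n * w t := by
  intro m n hmn
  have hint (k : ℕ) : IntervalIntegrable (fun t => t ^ k * w t) volume 0 1 :=
    hw.continuousOn_mul (by fun_prop)
  rw [← sub_pos, ← intervalIntegral.integral_sub (hint m) (hint n)]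
  refine intervalIntegral.intervalIntegral_pos_of_pos_on ((hint m).sub (hint n))
    (fun t ht => ?_) zero_lt_one
  have hpow : t ^ n < t ^ m := pow_lt_pow_right_of_lt_one₀ ht.1 ht.2 hmn
  exact sub_pos.2 (mul_lt_mul_of_pos_right hpow (hpos t ht))

end Moments

/-- The integrand of `dirExp` in the coordinates `x = 1 - a`, `y = 1 - b`, without its factor
`(1 - (x + y)) ^ (j - 1)`. -/
noncomputable def reflectedKernel (x y : ℝ) : ℝ :=
  x * y ^ 2 * (1 / 2 - x) / (x + y) ^ 3

theorem dirExp_succ_eq_integral_reflectedKernel (n : ℕ) :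
    dirExp (n + 1) =
      ∫ y in (0 : ℝ)..1, ∫ x in (0 : ℝ)..1, reflectedKernel x y * (1 - (x + y)) ^ n := by
  let F (a b : ℝ) : ℝ := (a - 1) * (b - 1) ^ 2 * (a - 1 / 2) * (a + b - 1) ^ n / (a + b - 2) ^ 3
  have hF (x y : ℝ) : F (1 - x) (1 - y) = reflectedKernel x y * (1 - (x + y)) ^ n := by
    simp only [F, reflectedKernel]
    rw [show 1 - x + (1 - y) - 2 = -(x + y) by ring, Odd.neg_pow (by decide), div_neg,
      show 1 - x + (1 - y) - 1 = 1 - (x + y) by ring]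
    ring
  calc dirExp (n + 1) = ∫ b in (0 : ℝ)..1, ∫ a in (0 : ℝ)..1, F a b := rfl
    _ = ∫ y in (0 : ℝ)..1, ∫ a in (0 : ℝ)..1, F a (1 - y) := by
        simp [intervalIntegral.integral_comp_sub_left fun b => ∫ a in (0 : ℝ)..1, F a b]
    _ = ∫ y in (0 : ℝ)..1, ∫ x in (0 : ℝ)..1, F (1 - x) (1 - y) :=
        intervalIntegral.integral_congr fun y _ => by
          simp [intervalIntegral.integral_comp_sub_left fun a => F a (1 - y)]
    _ = _ := by simp only [hF]

theorem abs_reflectedKernel_le_one {x y : ℝ} (hx : x ∈ Icc (0 : ℝ) 1) (hy : 0 ≤ y) :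
    |reflectedKernel x y| ≤ 1 := by
  obtain ⟨hx₀, hx₁⟩ := hx
  have hnum : x * y ^ 2 ≤ (x + y) ^ 3 :=
    calc x * y ^ 2 ≤ (x + y) * (x + y) ^ 2 := by gcongr <;> linarith
      _ = (x + y) ^ 3 := by ring
  have hfactor : |1 / 2 - x| ≤ 1 := abs_le.2 ⟨by linarith, by linarith⟩
  rw [reflectedKernel, abs_div, abs_mul, abs_of_nonneg (by positivity : 0 ≤ x * y ^ 2),
    abs_of_nonneg (by positivity : 0 ≤ (x + y) ^ 3)]
  exact div_le_one_of_le₀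
    ((mul_le_of_le_one_right (by positivity) hfactor).trans hnum) (by positivity)

theorem integrableOn_reflectedKernel :
    IntegrableOn (uncurry reflectedKernel) (Icc 0 1 ×ˢ Icc 0 1) := by
  have hmeas : Measurable (uncurry reflectedKernel) := by
    unfold reflectedKernel uncurry
    fun_prop
  refine Measure.integrableOn_of_bounded (M := 1)
    (isCompact_Icc.prod isCompact_Icc).measure_lt_top.ne hmeas.aestronglyMeasurable ?_
  filter_upwards [ae_restrict_mem (measurableSet_Icc.prod measurableSet_Icc)] with p hp
  exact abs_reflectedKernel_le_one hp.1 hp.2.1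

/-- The integral of `reflectedKernel` over the slice `x + y = σ` of the unit square,
parametrised by `y`; the density of the moments of `dirExp`. -/
noncomputable def sumDensity (σ : ℝ) : ℝ :=
  ∫ y in (max 0 (σ - 1))..(min 1 σ), reflectedKernel (σ - y) y

theorem integral_reflectedKernel_mul_comp_add {φ : ℝ → ℝ} (hφ : Continuous φ) :
    ∫ y in (0 : ℝ)..1, ∫ x in (0 : ℝ)..1, reflectedKernel x y * φ (x + y) =
      ∫ σ in (0 : ℝ)..2, sumDensity σ * φ σ := by
  have hint : IntegrableOn (uncurry fun x y => reflectedKernel x y * φ (x + y))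
      (Icc 0 1 ×ˢ Icc 0 1) :=
    integrableOn_reflectedKernel.mul_continuousOn (g' := fun p : ℝ × ℝ => φ (p.1 + p.2))
      (by fun_prop) (isCompact_Icc.prod isCompact_Icc)
  rw [intervalIntegral_intervalIntegral_eq_sub zero_le_one zero_le_one hint]
  simp only [sub_add_cancel, intervalIntegral.integral_mul_const, sub_zero, sumDensity, add_zero,
    one_add_one_eq_two]

theorem integral_reflectedKernel_sub (σ c d : ℝ) :
    ∫ y in c..d, reflectedKernel (σ - y) y =
      (σ * (1 / 2 - σ) * ((d ^ 3 - c ^ 3) / 3) + (2 * σ - 1 / 2) * ((d ^ 4 - c ^ 4) / 4) -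
        (d ^ 5 - c ^ 5) / 5) / σ ^ 3 := by
  have hpoly (y : ℝ) : reflectedKernel (σ - y) y =
      (σ * (1 / 2 - σ) * y ^ 2 + (2 * σ - 1 / 2) * y ^ 3 - y ^ 4) / σ ^ 3 := by
    rw [reflectedKernel, sub_add_cancel]
    ring
  simp only [hpoly, intervalIntegral.integral_div]
  rw [intervalIntegral.integral_sub, intervalIntegral.integral_add]
  · simp only [intervalIntegral.integral_const_mul, integral_pow]
    norm_num
  all_goals exact Continuous.intervalIntegrable (by fun_prop) _ _

theorem sumDensity_of_le_one {σ : ℝ} (h₀ : 0 ≤ σ) (h₁ : σ ≤ 1) :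
    sumDensity σ = σ * (5 - 4 * σ) / 120 := by
  rw [sumDensity, max_eq_left (by linarith), min_eq_right h₁, integral_reflectedKernel_sub]
  rcases h₀.eq_or_lt with rfl | hσ
  · norm_num
  · field

theorem sumDensity_of_one_le {σ : ℝ} (h₁ : 1 ≤ σ) :
    sumDensity σ =
      (2 - σ) * (-24 + 38 * σ - 6 * σ ^ 2 - 3 * σ ^ 3 - 4 * σ ^ 4) / (120 * σ ^ 3) := by
  have hσ : σ ≠ 0 := by positivity
  rw [sumDensity, max_eq_right (by linarith), min_eq_left h₁, integral_reflectedKernel_sub]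
  field

theorem continuousOn_sumDensity_Icc_zero_one : ContinuousOn sumDensity (Icc 0 1) :=
  ContinuousOn.congr (f := fun σ => σ * (5 - 4 * σ) / 120) (by fun_prop)
    fun _ hσ => sumDensity_of_le_one hσ.1 hσ.2

theorem continuousOn_sumDensity_Ici_one : ContinuousOn sumDensity (Ici 1) := by
  refine ContinuousOn.congr ?_ fun σ hσ => sumDensity_of_one_le hσ
  refine ContinuousOn.div (by fun_prop) (by fun_prop) fun σ hσ => ?_
  have : 0 < σ := zero_lt_one.trans_le hσ
  positivity

theorem continuousOn_sumDensity_one_sub : ContinuousOn (fun t => sumDensity (1 - t)) (Icc 0 1) :=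
  continuousOn_sumDensity_Icc_zero_one.comp (by fun_prop)
    fun _ ht => ⟨sub_nonneg.2 ht.2, sub_le_self 1 ht.1⟩

theorem continuousOn_sumDensity_one_add : ContinuousOn (fun t => sumDensity (1 + t)) (Icc 0 1) :=
  continuousOn_sumDensity_Ici_one.comp (by fun_prop) fun _ ht => le_add_of_nonneg_right ht.1

theorem dirExp_succ_eq_integral_pow_mul (n : ℕ) :
    dirExp (n + 1) =
      ∫ t in (0 : ℝ)..1, t ^ n * (sumDensity (1 - t) + (-1) ^ n * sumDensity (1 + t)) := by
  have hpow : Continuous fun σ : ℝ => (1 - σ) ^ n := by fun_prop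
  have hleft : IntervalIntegrable (fun σ => sumDensity σ * (1 - σ) ^ n) volume (1 - 1) 1 := by
    refine ContinuousOn.intervalIntegrable_of_Icc (by norm_num) ?_
    rw [sub_self]
    exact continuousOn_sumDensity_Icc_zero_one.mul hpow.continuousOn
  have hright : IntervalIntegrable (fun σ => sumDensity σ * (1 - σ) ^ n) volume 1 (1 + 1) :=
    ContinuousOn.intervalIntegrable_of_Icc (by norm_num)
      ((continuousOn_sumDensity_Ici_one.mono Icc_subset_Ici_self).mul hpow.continuousOn)
  have hfold := intervalIntegral_symm_eq_integral_sub_add_add hleft hright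
  rw [sub_self, one_add_one_eq_two] at hfold
  rw [dirExp_succ_eq_integral_reflectedKernel, integral_reflectedKernel_mul_comp_add hpow, hfold]
  refine intervalIntegral.integral_congr fun t _ => ?_
  simp only [sub_sub_cancel, sub_add_cancel_left, neg_pow t]
  ring

theorem sumDensity_one_sub_add_one_add {t : ℝ} (ht : t ∈ Icc (0 : ℝ) 1) :
    sumDensity (1 - t) + sumDensity (1 + t) =
      (1 - t) * (1 + 4 * t - 12 * t ^ 2 - 3 * t ^ 3) / (60 * (1 + t) ^ 3) := by
  obtain ⟨h₀, h₁⟩ := ht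
  rw [sumDensity_of_le_one (by linarith) (by linarith), sumDensity_of_one_le (by linarith)]
  field

theorem sumDensity_one_sub_sub_one_add {t : ℝ} (ht : t ∈ Icc (0 : ℝ) 1) :
    sumDensity (1 - t) - sumDensity (1 + t) =
      t * (1 - t) * (3 + 27 * t + 16 * t ^ 2 + 4 * t ^ 3) / (60 * (1 + t) ^ 3) := by
  obtain ⟨h₀, h₁⟩ := ht
  rw [sumDensity_of_le_one (by linarith) (by linarith), sumDensity_of_one_le (by linarith)]
  field

theorem sumDensity_one_add_lt_one_sub {t : ℝ} (ht : t ∈ Ioo (0 : ℝ) 1) :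
    sumDensity (1 + t) < sumDensity (1 - t) := by
  obtain ⟨h₀, h₁⟩ := ht
  have : 0 < 1 - t := sub_pos.2 h₁
  rw [← sub_pos, sumDensity_one_sub_sub_one_add ⟨h₀.le, h₁.le⟩]
  positivity

theorem dirExp_succ_lt_of_odd {m n : ℕ} (hmn : m < n) (hm : Odd m) (hn : Odd n) :
    dirExp (n + 1) < dirExp (m + 1) := by
  have hint : IntervalIntegrable (fun t => sumDensity (1 - t) - sumDensity (1 + t)) volume 0 1 :=
    (continuousOn_sumDensity_one_sub.sub
      continuousOn_sumDensity_one_add).intervalIntegrable_of_Icc zero_le_one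
  simpa only [dirExp_succ_eq_integral_pow_mul, hm.neg_one_pow, hn.neg_one_pow, neg_one_mul,
    ← sub_eq_add_neg] using
    strictAnti_integral_pow_mul hint (fun t ht => sub_pos.2 (sumDensity_one_add_lt_one_sub ht)) hmn

theorem monotoneOn_div_one_add_sq : MonotoneOn (fun t : ℝ => t / (1 + t) ^ 2) (Icc 0 1) := by
  rintro s ⟨hs₀, hs₁⟩ t ⟨ht₀, ht₁⟩ hst
  have hcross : 0 ≤ (t - s) * (1 - s * t) :=
    mul_nonneg (sub_nonneg.2 hst) (sub_nonneg.2 (mul_le_one₀ hs₁ ht₀ ht₁))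
  exact (div_le_div_iff₀ (by positivity) (by positivity)).2 (by linarith)

theorem monotoneOn_pow_div_one_add_pow_four {n : ℕ} (hn : 2 ≤ n) :
    MonotoneOn (fun t : ℝ => t ^ n / (1 + t) ^ 4) (Icc 0 1) := by
  obtain ⟨m, rfl⟩ := Nat.exists_eq_add_of_le' hn
  intro s hs t ht hst
  have hsq := monotoneOn_div_one_add_sq hs ht hst
  have hs₀ := hs.1
  calc s ^ (m + 2) / (1 + s) ^ 4 = s ^ m * (s / (1 + s) ^ 2) ^ 2 := by rw [div_pow]; ring
    _ ≤ t ^ m * (t / (1 + t) ^ 2) ^ 2 := by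
        have ht₀ := ht.1
        gcongr
    _ = t ^ (m + 2) / (1 + t) ^ 4 := by rw [div_pow]; ring

theorem exists_single_crossing_cubic :
    ∃ c ∈ Ioo (0 : ℝ) 1, ∀ t : ℝ, 0 ≤ t → 0 ≤ (c - t) * (1 + 4 * t - 12 * t ^ 2 - 3 * t ^ 3) := by
  obtain ⟨c, hc, hroot⟩ : (0 : ℝ) ∈ (fun t : ℝ => 1 + 4 * t - 12 * t ^ 2 - 3 * t ^ 3) '' Ioo 0 1 :=
    intermediate_value_Ioo' zero_le_one (by fun_prop) (by norm_num)
  have hc₀ := hc.1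
  refine ⟨c, hc, fun t ht => ?_⟩
  have hfactor : 1 + 4 * t - 12 * t ^ 2 - 3 * t ^ 3 =
      (c - t) * ((1 + 12 * c * t + 3 * c * t * (c + t)) / c) := by
    field_simp
    linear_combination t * hroot
  rw [hfactor, ← mul_assoc, ← sq]
  positivity

theorem integral_one_add_mul_one_sub_mul_cubic :
    ∫ t in (0 : ℝ)..1, (1 + t) * (1 - t) * (1 + 4 * t - 12 * t ^ 2 - 3 * t ^ 3) = -11 / 60 := by
  have hexpand (t : ℝ) : (1 + t) * (1 - t) * (1 + 4 * t - 12 * t ^ 2 - 3 * t ^ 3) =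
      1 + 4 * t - 13 * t ^ 2 - 7 * t ^ 3 + 12 * t ^ 4 + 3 * t ^ 5 := by ring
  simp only [hexpand]
  rw [intervalIntegral.integral_add, intervalIntegral.integral_add, intervalIntegral.integral_sub,
    intervalIntegral.integral_sub, intervalIntegral.integral_add,
    intervalIntegral.integral_const_mul 4]
  · simp only [intervalIntegral.integral_const_mul, integral_pow, integral_id,
      intervalIntegral.integral_const]
    norm_num
  all_goals exact Continuous.intervalIntegrable (by fun_prop) _ _

theorem dirExp_succ_neg_of_even {n : ℕ} (hn : 2 ≤ n) (heven : Even n) : dirExp (n + 1) < 0 := by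
  let g (t : ℝ) : ℝ := (1 + t) * (1 - t) * (1 + 4 * t - 12 * t ^ 2 - 3 * t ^ 3) / 60
  obtain ⟨c, ⟨hc₀, hc₁⟩, hc⟩ := exists_single_crossing_cubic
  have hmoment : dirExp (n + 1) = ∫ t in (0 : ℝ)..1, t ^ n / (1 + t) ^ 4 * g t := by
    rw [dirExp_succ_eq_integral_pow_mul]
    refine intervalIntegral.integral_congr fun t ht => ?_
    rw [uIcc_of_le zero_le_one] at ht
    have ht₀ := ht.1
    simp only [heven.neg_one_pow, one_mul, sumDensity_one_sub_add_one_add ht, g]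
    field
  have hcross (t : ℝ) (ht : t ∈ Icc (0 : ℝ) 1) : 0 ≤ (c - t) * g t := by
    have hweight : 0 ≤ (1 + t) * (1 - t) / 60 :=
      div_nonneg (mul_nonneg (by linarith [ht.1]) (sub_nonneg.2 ht.2)) (by norm_num)
    calc 0 ≤ (1 + t) * (1 - t) / 60 * ((c - t) * (1 + 4 * t - 12 * t ^ 2 - 3 * t ^ 3)) :=
          mul_nonneg hweight (hc t ht.1)
      _ = (c - t) * g t := by ring
  have hg_int : IntervalIntegrable g volume 0 1 := Continuous.intervalIntegrable (by fun_prop) _ _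
  have hg : ∫ t in (0 : ℝ)..1, g t = -11 / 60 / 60 := by
    simp only [g, intervalIntegral.integral_div, integral_one_add_mul_one_sub_mul_cubic]
  calc dirExp (n + 1) ≤ c ^ n / (1 + c) ^ 4 * ∫ t in (0 : ℝ)..1, g t :=
        hmoment.trans_le <| integral_mul_le_of_single_crossing zero_le_one
          (monotoneOn_pow_div_one_add_pow_four hn) hg_int ⟨hc₀.le, hc₁.le⟩ hcross
    _ < 0 := mul_neg_of_pos_of_neg (by positivity) (by norm_num [hg])

theorem stmt_15 :
    (∀ j : ℕ, 2 ≤ j → Odd j → dirExp j < 0) ∧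
      (∀ j j' : ℕ, 2 ≤ j → j < j' → Even j → Even j' → dirExp j' < dirExp j) := by
  constructor
  · intro j hj hodd
    obtain ⟨n, rfl⟩ : ∃ n, j = n + 1 := Nat.exists_eq_add_of_le' (by omega)
    have heven : Even n := by grind
    have hn : 2 ≤ n := by grind
    exact dirExp_succ_neg_of_even hn heven
  · intro j j' hj hlt heven heven'
    obtain ⟨m, rfl⟩ : ∃ m, j = m + 1 := Nat.exists_eq_add_of_le' (by omega)
    obtain ⟨n, rfl⟩ : ∃ n, j' = n + 1 := Nat.exists_eq_add_of_le' (by omega)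
    have hm : Odd m := by grind
    have hn : Odd n := by grind
    exact dirExp_succ_lt_of_odd (Nat.succ_lt_succ_iff.1 hlt) hm hn
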